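/- arXiv:1209.4972 — 2 statements merged into one kernel-verified Lean document; each statement's English description precedes it below -/
import Mathlib

section
/- For T ⊆ [n], the prime P_T(G) is a minimal prime of J_G if and only if T has the cutpoint property for G, i.e., if and only if T ∈ 𝒞(G). -/
open MvPolynomial

noncomputable section

/-- The binomial edge ideal of a simple graph `G` on vertex type `V`, inside the
polynomial ring `K[x_i, y_i : i ∈ V]`, modelled as `MvPolynomial (V ⊕ V) K`
with `x_i = X (Sum.inl i)` and `y_i = X (Sum.inr i)`. -/
def binomialEdgeIdeal (K : Type*) [Field K] {V : Type*} (G : SimpleGraph V) :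
    Ideal (MvPolynomial (V ⊕ V) K) :=
  Ideal.span { f | ∃ i j : V, G.Adj i j ∧
    f = X (Sum.inl i) * X (Sum.inr j) - X (Sum.inl j) * X (Sum.inr i) }

/-- The minimal number of generators of an ideal. -/
def mu {R : Type*} [CommRing R] (J : Ideal R) : ℕ :=
  sInf {k | ∃ s : Finset R, s.card = k ∧ Ideal.span (s : Set R) = J}

/-- The height of an ideal: the infimum of the heights of the primes containing it. -/
def htI {R : Type*} [CommRing R] (I : Ideal R) : ℕ∞ :=
  ⨅ (P : PrimeSpectrum R) (_ : I ≤ P.asIdeal), Order.height P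

/-- An ideal is unmixed if all of its minimal primes have height equal to its height. -/
def IsUnmixed {R : Type*} [CommRing R] (I : Ideal R) : Prop :=
  ∀ P ∈ I.minimalPrimes, htI P = htI I

/-- The depth of a ring `R` with respect to an ideal `m`: the supremum of the
lengths of regular sequences on `R` consisting of elements of `m`. -/
def ringDepth (R : Type*) [CommRing R] (m : Ideal R) : ℕ∞ :=
  sSup {d : ℕ∞ | ∃ l : List R, (l.length : ℕ∞) = d ∧ (∀ x ∈ l, x ∈ m) ∧
    RingTheory.Sequence.IsRegular R l}

/-- The graded maximal ideal of the quotient of a polynomial ring by an ideal `J`: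
the image of the ideal generated by all the variables. -/
def gradedMaxQuot {K σ : Type*} [Field K] (J : Ideal (MvPolynomial σ K)) :
    Ideal (MvPolynomial σ K ⧸ J) :=
  (Ideal.span (Set.range (X : σ → MvPolynomial σ K))).map (Ideal.Quotient.mk J)

/-- `S/J` is Cohen–Macaulay: its depth with respect to the graded maximal ideal
equals its Krull dimension. -/
def IsCMQuot {K σ : Type*} [Field K] (J : Ideal (MvPolynomial σ K)) : Prop :=
  (ringDepth (MvPolynomial σ K ⧸ J) (gradedMaxQuot J) : WithBot ℕ∞) =
    ringKrullDim (MvPolynomial σ K ⧸ J)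

/-- A graph is a path graph if its vertices can be ordered `v_1, …, v_m` so that
its edges are exactly `{v_i, v_{i+1}}` for `1 ≤ i ≤ m - 1`. -/
def IsPathGraph {V : Type*} (H : SimpleGraph V) : Prop :=
  ∃ (m : ℕ) (e : V ≃ Fin m), ∀ a b : V,
    H.Adj a b ↔ ((e a : ℕ) + 1 = (e b : ℕ) ∨ (e b : ℕ) + 1 = (e a : ℕ))

/-- The vertex set of a connected component, as a set of vertices. -/
def compSupp {V : Type*} (G : SimpleGraph V) (c : G.ConnectedComponent) : Set V :=
  {v | G.connectedComponentMk v = c}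

end

noncomputable section

/-- The prime `P_T(G)` associated with a subset `T` of the vertices: it is generated
by the variables `x_i, y_i` for `i ∈ T` together with the binomial edge ideals of the
complete graphs on the connected components of the subgraph of `G` induced on the
complement of `T` (i.e. all `2`-minors `x_i y_j - x_j y_i` for distinct vertices
`i, j ∉ T` lying in the same connected component of that induced subgraph). -/
def PTIdeal (K : Type*) [Field K] {n : ℕ} (G : SimpleGraph (Fin n)) (T : Set (Fin n)) :
    Ideal (MvPolynomial (Fin n ⊕ Fin n) K) :=
  Ideal.span
    ({ f | ∃ i ∈ T, f = X (Sum.inl i) } ∪ { f | ∃ i ∈ T, f = X (Sum.inr i) } ∪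
      { f | ∃ (i j : Fin n) (hi : i ∈ Tᶜ) (hj : j ∈ Tᶜ), i ≠ j ∧
        (G.induce Tᶜ).Reachable ⟨i, hi⟩ ⟨j, hj⟩ ∧
        f = X (Sum.inl i) * X (Sum.inr j) - X (Sum.inl j) * X (Sum.inr i) })

/-- The number of connected components of the subgraph of `G` induced on `U`. -/
def cNum {n : ℕ} (G : SimpleGraph (Fin n)) (U : Set (Fin n)) : ℕ :=
  Nat.card (G.induce U).ConnectedComponent

/-- `T` has the cutpoint property for `G`: every `i ∈ T` is a cutpoint of the
subgraph of `G` induced on `([n] ∖ T) ∪ {i}`, i.e. removing `i` from that graph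
increases the number of connected components. -/
def HasCutpointProperty {n : ℕ} (G : SimpleGraph (Fin n)) (T : Set (Fin n)) : Prop :=
  ∀ i ∈ T, cNum G (Tᶜ ∪ {i}) < cNum G Tᶜ

/-!
The ideal `P_T(G)` is toric modulo the variables of `T`: it is the kernel of the map that kills
`x_i, y_i` for `i ∈ T` and sends `x_i ↦ z_i s_c`, `y_i ↦ z_i t_c` for `i` in the component `c` of
`G ∖ T`, because two monomials with the same image are connected by exchanges
`x_i y_j ↔ x_j y_i` within components. So `P_T(G)` is prime. Every prime `Q ⊇ J_G` contains some
`P_S(G)`: take `S = {i | x_i, y_i ∈ Q}`, and note that `x_b f_{ac} = x_a f_{bc} + x_c f_{ab}` makes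
`f_{ab} ∈ Q` transitive off `S`. Hence `P_T(G)` is minimal over `J_G` iff no other `P_S(G)` is
contained in it. Evaluating at suitable points shows `P_S(G) ⊆ P_T(G)` iff `S ⊆ T` and adding back
`T ∖ S` joins no two components of `G ∖ T`; a vertex that joins two of them is exactly a cutpoint.
-/

section MonomialKernel

lemma ker_le_of_apply_basis_eq {R M N ι κ : Type*} [CommRing R] [AddCommGroup M] [Module R M]
    [AddCommGroup N] [Module R N] (b : Module.Basis ι R M) (b' : Module.Basis κ R N)
    {φ : M →ₗ[R] N} {e : ι → κ} (hφ : ∀ i, φ (b i) = b' (e i)) {P : Submodule R M}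
    (hP : ∀ i j, e i = e j → b i - b j ∈ P) : LinearMap.ker φ ≤ P := by
  have hfactors : (fun i => P.mkQ (b i)).FactorsThrough e := fun i j hij =>
    (Submodule.Quotient.eq P).2 (hP i j hij)
  have hcomp : b'.constr R (Function.extend e (fun i => P.mkQ (b i)) 0) ∘ₗ φ = P.mkQ :=
    b.ext fun i => by
      rw [LinearMap.comp_apply, hφ, Module.Basis.constr_basis, hfactors.extend_apply]
  calc LinearMap.ker φ ≤ LinearMap.ker P.mkQ := hcomp ▸ LinearMap.ker_le_ker_comp _ _
    _ = P := P.ker_mkQ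

variable {σ A B : Type*} {p : σ → A} {q : σ → B}

lemma prod_map_eq_of_exchange {M : Type*} [CommMonoid M] {x : σ → M}
    (hinj : ∀ s t, p s = p t → q s = q t → s = t)
    (hexch : ∀ s t u, p s = p t → q s = q u → s ≠ t →
      ∃ w, p w = p u ∧ q w = q t ∧ x t * x u = x s * x w)
    {m m' : Multiset σ} (hp : m.map p = m'.map p) (hq : m.map q = m'.map q) :
    (m.map x).prod = (m'.map x).prod := by
  induction m using Multiset.induction_on generalizing m' with
  | empty => rw [Multiset.map_eq_zero.1 hp.symm]
  | cons s m ih =>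
    -- It suffices to bring `m'` into a form with `s` in front, without changing its product.
    suffices ∃ r : Multiset σ, (s ::ₘ r).map p = m'.map p ∧ (s ::ₘ r).map q = m'.map q ∧
        ((s ::ₘ r).map x).prod = (m'.map x).prod by
      obtain ⟨r, hrp, hrq, hrx⟩ := this
      rw [← hrp, Multiset.map_cons, Multiset.map_cons, Multiset.cons_inj_right] at hp
      rw [← hrq, Multiset.map_cons, Multiset.map_cons, Multiset.cons_inj_right] at hq
      rw [← hrx, Multiset.map_cons, Multiset.map_cons, Multiset.prod_cons, Multiset.prod_cons,
        ih hp hq]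
    by_cases hs : s ∈ m'
    · obtain ⟨r, rfl⟩ := Multiset.exists_cons_of_mem hs
      exact ⟨r, rfl, rfl, rfl⟩
    obtain ⟨t, ht, hpt⟩ : ∃ t ∈ m', p t = p s :=
      Multiset.mem_map.1 (hp ▸ Multiset.mem_map_of_mem p (Multiset.mem_cons_self s m))
    obtain ⟨u, hu, hqu⟩ : ∃ u ∈ m', q u = q s :=
      Multiset.mem_map.1 (hq ▸ Multiset.mem_map_of_mem q (Multiset.mem_cons_self s m))
    have hst : s ≠ t := fun h => hs (h ▸ ht)
    have hut : u ≠ t := by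
      rintro rfl
      exact hst (hinj s u hpt.symm hqu.symm)
    obtain ⟨w, hpw, hqw, hx⟩ := hexch s t u hpt.symm hqu.symm hst
    obtain ⟨r, rfl⟩ := Multiset.exists_cons_of_mem ht
    obtain ⟨r, rfl⟩ := Multiset.exists_cons_of_mem ((Multiset.mem_cons.1 hu).resolve_left hut)
    refine ⟨w ::ₘ r, ?_, ?_, ?_⟩
    · simp only [Multiset.map_cons, hpt, hpw]
    · simp only [Multiset.map_cons, hqu, hqw, Multiset.cons_swap]
    · simp only [Multiset.map_cons, Multiset.prod_cons, ← mul_assoc, hx]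

variable (R : Type*) [CommRing R]

/-- The monomial map `x_s ↦ u_{p s} v_{q s}`, where the variables `u` and `v` are indexed by
the two summands of `A ⊕ B`. For `σ = A × B` and the two projections it is the Segre
parametrization of matrices of rank at most one. -/
def segreMap (p : σ → A) (q : σ → B) : MvPolynomial σ R →ₐ[R] MvPolynomial (A ⊕ B) R :=
  aeval fun s => X (Sum.inl (p s)) * X (Sum.inr (q s))

lemma segreMap_X (p : σ → A) (q : σ → B) (s : σ) :
    segreMap R p q (X s) = X (Sum.inl (p s)) * X (Sum.inr (q s)) :=
  aeval_X _ _

lemma segreMap_monomial_one (p : σ → A) (q : σ → B) (a : σ →₀ ℕ) :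
    segreMap R p q (monomial a 1) =
      monomial (Finsupp.sumElim (a.mapDomain p) (a.mapDomain q)) 1 := by
  have hsum : a.mapDomain (Sum.inl ∘ p) + a.mapDomain (Sum.inr ∘ q) =
      Finsupp.sumElim (a.mapDomain p) (a.mapDomain q) := by
    rw [Finsupp.mapDomain_comp, Finsupp.mapDomain_comp]
    ext (i | j)
    · simp [Finsupp.mapDomain_apply Sum.inl_injective, Finsupp.mapDomain_of_notMem_range]
    · simp [Finsupp.mapDomain_apply Sum.inr_injective, Finsupp.mapDomain_of_notMem_range]
  calc segreMap R p q (monomial a 1)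
      = rename (Sum.inl ∘ p) (monomial a 1) * rename (Sum.inr ∘ q) (monomial a 1) := by
        rw [monomial_eq]
        simp [segreMap_X, map_finsuppProd, mul_pow, Finsupp.prod_mul]
    _ = _ := by rw [rename_monomial, rename_monomial, monomial_mul, one_mul, hsum]

variable {R}

lemma ker_segreMap_le {I : Ideal (MvPolynomial σ R)} (hinj : ∀ s t, p s = p t → q s = q t → s = t)
    (hexch : ∀ s t u, p s = p t → q s = q u → s ≠ t →
      ∃ w, p w = p u ∧ q w = q t ∧ X t * X u - X s * X w ∈ I) :
    RingHom.ker (segreMap R p q) ≤ I := by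
  have hprod (a : σ →₀ ℕ) : Ideal.Quotient.mk I (monomial a 1) =
      (a.toMultiset.map fun s => Ideal.Quotient.mk I (X s)).prod := by
    rw [monomial_eq, C_1, one_mul, map_finsuppProd, Finsupp.toMultiset_map,
      Finsupp.prod_toMultiset, Finsupp.prod_mapDomain_index pow_zero pow_add]
    simp only [map_pow]
  refine ker_le_of_apply_basis_eq (basisMonomials σ R) (basisMonomials (A ⊕ B) R)
    (φ := (segreMap R p q).toLinearMap) (P := I.restrictScalars R)
    (fun a => by simpa using segreMap_monomial_one R p q a) fun a b hab => ?_
  obtain ⟨hp, hq⟩ : a.mapDomain p = b.mapDomain p ∧ a.mapDomain q = b.mapDomain q :=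
    Prod.mk.inj (Finsupp.sumFinsuppEquivProdFinsupp.symm.injective hab)
  rw [coe_basisMonomials, Submodule.restrictScalars_mem, ← Ideal.Quotient.eq, hprod, hprod]
  refine prod_map_eq_of_exchange hinj (fun s t u hst hsu hne => ?_)
    (by rw [Finsupp.toMultiset_map, hp, Finsupp.toMultiset_map])
    (by rw [Finsupp.toMultiset_map, hq, Finsupp.toMultiset_map])
  obtain ⟨w, hpw, hqw, hw⟩ := hexch s t u hst hsu hne
  exact ⟨w, hpw, hqw, by simpa only [map_mul] using Ideal.Quotient.eq.2 hw⟩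

end MonomialKernel

section LabelIdeal

variable {V C : Type*}

/-- The vertex `i` carrying the variable `x_i` (left summand) or `y_i` (right summand). -/
abbrev vertex (v : V ⊕ V) : V :=
  Sum.elim id id v

variable (R : Type*) [CommRing R]

/-- The binomial `f_{ij} = x_i y_j - x_j y_i`. -/
abbrev edgeBinomial (i j : V) : MvPolynomial (V ⊕ V) R :=
  X (Sum.inl i) * X (Sum.inr j) - X (Sum.inl j) * X (Sum.inr i)

/-- The ideal attached to a partial labelling `c` of the vertices: it contains the variables of the
unlabelled vertices and the binomials `f_{ij}` of equally labelled ones. It is `P_T(G)` when `c`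
labels the vertices outside `T` by their connected component in `G ∖ T`. -/
def labelIdeal (c : V → Option C) : Ideal (MvPolynomial (V ⊕ V) R) :=
  Ideal.span ({f | ∃ v, c (vertex v) = none ∧ f = X v} ∪
    {f | ∃ i j, c i = c j ∧ f = edgeBinomial R i j})

/-- The substitution of zero for the variables of the unlabelled vertices. -/
def killUnlabelled (c : V → Option C) : MvPolynomial (V ⊕ V) R →ₐ[R] MvPolynomial (V ⊕ V) R :=
  aeval fun v => if (c (vertex v)).isSome then X v else 0

/-- The parametrization `x_i ↦ z_i s_{c i}`, `y_i ↦ z_i t_{c i}` at the labelled vertices, which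
sends the variables of the unlabelled ones to zero; its kernel is `labelIdeal R c`. -/
def labelParam (c : V → Option C) :
    MvPolynomial (V ⊕ V) R →ₐ[R] MvPolynomial (V ⊕ (Option C ⊕ Option C)) R :=
  (segreMap R vertex (Sum.map c c)).comp (killUnlabelled R c)

variable {R} {c : V → Option C}

lemma X_mem_labelIdeal {v : V ⊕ V} (hv : c (vertex v) = none) : X v ∈ labelIdeal R c :=
  Ideal.subset_span (Or.inl ⟨v, hv, rfl⟩)

lemma edgeBinomial_mem_labelIdeal {i j : V} (hij : c i = c j) :
    edgeBinomial R i j ∈ labelIdeal R c :=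
  Ideal.subset_span (Or.inr ⟨i, j, hij, rfl⟩)

lemma labelIdeal_le_iff {I : Ideal (MvPolynomial (V ⊕ V) R)} :
    labelIdeal R c ≤ I ↔ (∀ v, c (vertex v) = none → X v ∈ I) ∧
      ∀ i j, c i = c j → edgeBinomial R i j ∈ I := by
  refine ⟨fun h => ⟨fun v hv => h (X_mem_labelIdeal hv),
    fun i j hij => h (edgeBinomial_mem_labelIdeal hij)⟩, fun ⟨hX, hf⟩ => Ideal.span_le.2 ?_⟩
  rintro f (⟨v, hv, rfl⟩ | ⟨i, j, hij, rfl⟩)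
  · exact hX v hv
  · exact hf i j hij

lemma edgeBinomial_mem_of_left {I : Ideal (MvPolynomial (V ⊕ V) R)} {i : V}
    (hi : ∀ v, vertex v = i → X v ∈ I) (j : V) : edgeBinomial R i j ∈ I :=
  I.sub_mem (I.mul_mem_right _ (hi (Sum.inl i) rfl)) (I.mul_mem_left _ (hi (Sum.inr i) rfl))

lemma edgeBinomial_mem_of_right {I : Ideal (MvPolynomial (V ⊕ V) R)} {j : V}
    (hj : ∀ v, vertex v = j → X v ∈ I) (i : V) : edgeBinomial R i j ∈ I :=
  I.sub_mem (I.mul_mem_left _ (hj (Sum.inr j) rfl)) (I.mul_mem_right _ (hj (Sum.inl j) rfl))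

lemma mk_killUnlabelled (f : MvPolynomial (V ⊕ V) R) :
    Ideal.Quotient.mk (labelIdeal R c) (killUnlabelled R c f) = Ideal.Quotient.mk _ f := by
  suffices h : (Ideal.Quotient.mkₐ R (labelIdeal R c)).comp (killUnlabelled R c) =
      Ideal.Quotient.mkₐ R _ from AlgHom.congr_fun h f
  refine MvPolynomial.algHom_ext fun v => ?_
  cases hv : c (vertex v) with
  | none =>
    have hX := Ideal.Quotient.eq_zero_iff_mem.2 (X_mem_labelIdeal (R := R) hv)
    simp [killUnlabelled, hv, hX]
  | some k => simp [killUnlabelled, hv]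

lemma labelIdeal_le_ker_labelParam : labelIdeal R c ≤ RingHom.ker (labelParam R c) := by
  refine labelIdeal_le_iff.2 ⟨fun v hv => ?_, fun i j hij => ?_⟩
  · simp [labelParam, killUnlabelled, hv]
  · rw [RingHom.mem_ker]
    cases hj : c j with
    | none => simp [labelParam, killUnlabelled, hij, hj]
    | some k =>
      simp only [labelParam, killUnlabelled, edgeBinomial, AlgHom.comp_apply, map_sub, map_mul,
        aeval_X, Sum.elim_inl, Sum.elim_inr, id_eq, hij, hj, Option.isSome_some, if_true,
        segreMap_X, Sum.map_inl, Sum.map_inr]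
      ring

lemma ker_segreMap_vertex_le (c : V → Option C) :
    RingHom.ker (segreMap R vertex (Sum.map c c)) ≤ labelIdeal R c := by
  refine ker_segreMap_le ?_ ?_
  · rintro (i | i) (j | j) hp hq <;> simp_all
  · rintro (i | i) (j | j) (k | k) hp hq hne <;>
      simp only [Sum.elim_inl, Sum.elim_inr, id_eq, Sum.map_inl, Sum.map_inr, Sum.inl.injEq,
        Sum.inr.injEq, reduceCtorEq] at hp hq
    · exact absurd (congrArg Sum.inl hp) hne
    · subst hp
      refine ⟨Sum.inr k, rfl, congrArg Sum.inr hq.symm, ?_⟩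
      rw [mul_comm (X (Sum.inr i))]
      exact edgeBinomial_mem_labelIdeal hq.symm
    · subst hp
      refine ⟨Sum.inl k, rfl, congrArg Sum.inl hq.symm, ?_⟩
      rw [mul_comm (X (Sum.inr i))]
      exact edgeBinomial_mem_labelIdeal hq
    · exact absurd (congrArg Sum.inr hp) hne

variable (R c)

theorem ker_labelParam : RingHom.ker (labelParam R c) = labelIdeal R c := by
  refine le_antisymm (fun f hf => ?_) labelIdeal_le_ker_labelParam
  have hmem : killUnlabelled R c f ∈ labelIdeal R c := ker_segreMap_vertex_le c hf
  rwa [← Ideal.Quotient.eq_zero_iff_mem, mk_killUnlabelled, Ideal.Quotient.eq_zero_iff_mem] at hmem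

theorem labelIdeal_isPrime [IsDomain R] : (labelIdeal R c).IsPrime :=
  ker_labelParam R c ▸ RingHom.ker_isPrime _

variable {R c}

lemma eval_eq_zero_of_mem_labelIdeal {g : Option C → R} (hg : g none = 0)
    {f : MvPolynomial (V ⊕ V) R} (hf : f ∈ labelIdeal R c) :
    eval (Sum.elim (fun i => if (c i).isSome then 1 else 0) (g ∘ c)) f = 0 := by
  suffices h : labelIdeal R c ≤ RingHom.ker (eval _) from h hf
  refine labelIdeal_le_iff.2 ⟨?_, fun i j hij => ?_⟩
  · rintro (i | i) hi <;> simp_all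
  · simp [hij]

lemma X_mem_labelIdeal_iff [Nontrivial R] {v : V ⊕ V} :
    X v ∈ labelIdeal R c ↔ c (vertex v) = none := by
  refine ⟨fun h => ?_, X_mem_labelIdeal⟩
  have heval := eval_eq_zero_of_mem_labelIdeal (g := fun k => if k.isSome then 1 else 0) rfl h
  rcases v with i | i <;> simpa using heval

lemma edgeBinomial_mem_labelIdeal_iff [Nontrivial R] {i j : V} :
    edgeBinomial R i j ∈ labelIdeal R c ↔ c i = none ∨ c j = none ∨ c i = c j := by
  classical
  constructor
  · intro h
    by_contra! hne
    obtain ⟨hi, hj, hij⟩ := hne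
    have heval := eval_eq_zero_of_mem_labelIdeal (g := Pi.single (c i) 1)
      (Pi.single_eq_of_ne hi.symm 1) h
    simp [Option.isSome_iff_ne_none, hi, hj, hij.symm] at heval
  · rintro (hi | hj | hij)
    · exact edgeBinomial_mem_of_left (fun v hv => X_mem_labelIdeal (hv ▸ hi)) j
    · exact edgeBinomial_mem_of_right (fun v hv => X_mem_labelIdeal (hv ▸ hj)) i
    · exact edgeBinomial_mem_labelIdeal hij

lemma edgeBinomial_mem_trans {Q : Ideal (MvPolynomial (V ⊕ V) R)} [Q.IsPrime] {a b d : V}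
    (hb : ∃ v, vertex v = b ∧ X v ∉ Q) (hab : edgeBinomial R a b ∈ Q)
    (hbd : edgeBinomial R b d ∈ Q) : edgeBinomial R a d ∈ Q := by
  obtain ⟨v, rfl, hv⟩ := hb
  refine (Ideal.IsPrime.mem_or_mem ‹_› ?_).resolve_left hv
  rcases v with b | b
  · have h : X (Sum.inl b) * edgeBinomial R a d =
        X (Sum.inl a) * edgeBinomial R b d + X (Sum.inl d) * edgeBinomial R a b := by
      simp only [edgeBinomial]; ring
    exact h ▸ Q.add_mem (Q.mul_mem_left _ hbd) (Q.mul_mem_left _ hab)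
  · have h : X (Sum.inr b) * edgeBinomial R a d =
        X (Sum.inr a) * edgeBinomial R b d + X (Sum.inr d) * edgeBinomial R a b := by
      simp only [edgeBinomial]; ring
    exact h ▸ Q.add_mem (Q.mul_mem_left _ hbd) (Q.mul_mem_left _ hab)

end LabelIdeal

section InducedComponents

variable {V : Type*} {G : SimpleGraph V} {U : Set V}

lemma reachable_induce_mono {W : Set V} (h : U ⊆ W) {j k : U} (hr : (G.induce U).Reachable j k) :
    (G.induce W).Reachable (Set.inclusion h j) (Set.inclusion h k) :=
  hr.map (G.induceHomOfLE h).toHom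

lemma reachable_induce_of_adj {j k : V} (hj : j ∈ U) (hk : k ∈ U) (hjk : G.Adj j k) :
    (G.induce U).Reachable ⟨j, hj⟩ ⟨k, hk⟩ :=
  SimpleGraph.Adj.reachable (G := G.induce U) (u := ⟨j, hj⟩) (v := ⟨k, hk⟩) hjk

lemma exists_adj_of_reachable_induce_insert {i : V} {j k : U}
    (hr : (G.induce (U ∪ {i})).Reachable (Set.inclusion Set.subset_union_left j)
      (Set.inclusion Set.subset_union_left k))
    (hnr : ¬ (G.induce U).Reachable j k) : ∃ u ∈ U, G.Adj u i := by
  obtain ⟨walk⟩ := hr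
  obtain ⟨d, -, ⟨hu, hju⟩, hd⟩ := walk.exists_boundary_dart
    {w | ∃ hw : w.1 ∈ U, (G.induce U).Reachable j ⟨w, hw⟩} ⟨j.2, .rfl⟩ fun ⟨_, h⟩ => hnr h
  have hadj : G.Adj d.fst d.snd := d.adj
  have hsnd : d.snd.1 ∉ U := fun hw => hd ⟨hw, hju.trans (reachable_induce_of_adj hu hw hadj)⟩
  have hi : d.snd.1 = i := d.snd.2.resolve_left hsnd
  rw [hi] at hadj
  exact ⟨d.fst, hu, hadj⟩

theorem card_connectedComponent_induce_insert_lt_iff [Finite U] {i : V} :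
    Nat.card (G.induce (U ∪ {i})).ConnectedComponent < Nat.card (G.induce U).ConnectedComponent ↔
      ∃ j k : U, (G.induce (U ∪ {i})).Reachable (Set.inclusion Set.subset_union_left j)
        (Set.inclusion Set.subset_union_left k) ∧ ¬ (G.induce U).Reachable j k := by
  let π : (G.induce U).ConnectedComponent → (G.induce (U ∪ {i})).ConnectedComponent :=
    SimpleGraph.ConnectedComponent.map (G.induceHomOfLE Set.subset_union_left).toHom
  constructor
  · intro hlt
    by_contra! hreach
    refine hlt.not_ge (Nat.card_le_card_of_injective π ?_)
    refine SimpleGraph.ConnectedComponent.ind₂ fun a b hab => ?_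
    exact SimpleGraph.ConnectedComponent.sound
      (hreach a b (SimpleGraph.ConnectedComponent.exact hab))
  · rintro ⟨j, k, hr, hnr⟩
    obtain ⟨u, hu, hui⟩ := exists_adj_of_reachable_induce_insert hr hnr
    have hsurj : Function.Surjective π := by
      refine SimpleGraph.ConnectedComponent.ind ?_
      rintro ⟨a, ha | rfl⟩
      · exact ⟨(G.induce U).connectedComponentMk ⟨a, ha⟩, rfl⟩
      · refine ⟨(G.induce U).connectedComponentMk ⟨u, hu⟩, SimpleGraph.ConnectedComponent.sound ?_⟩
        exact reachable_induce_of_adj (U := U ∪ {a}) (Or.inl hu) (Or.inr rfl) hui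
    refine lt_of_le_of_ne (Nat.card_le_card_of_surjective π hsurj) fun hcard => hnr ?_
    have hinj : Function.Injective π :=
      ((Nat.bijective_iff_surjective_and_card π).2 ⟨hsurj, hcard.symm⟩).1
    exact SimpleGraph.ConnectedComponent.exact (hinj (SimpleGraph.ConnectedComponent.sound hr))

variable (G U)

open Classical in
/-- The connected component of a vertex of `U` in the subgraph induced on `U`; the vertices outside
`U` get `none`, that is, they are unlabelled in the sense of `labelIdeal`. -/
def componentIn (i : V) : Option (G.induce U).ConnectedComponent :=
  if h : i ∈ U then some ((G.induce U).connectedComponentMk ⟨i, h⟩) else none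

variable {G U}

lemma componentIn_eq_none_iff {i : V} : componentIn G U i = none ↔ i ∉ U := by
  simp [componentIn]

lemma componentIn_eq_componentIn_iff {i j : V} (hi : i ∈ U) (hj : j ∈ U) :
    componentIn G U i = componentIn G U j ↔ (G.induce U).Reachable ⟨i, hi⟩ ⟨j, hj⟩ := by
  simp [componentIn, hi, hj]

end InducedComponents

section ReachableBinomials

variable {K : Type*} [Field K] {V : Type*} {G : SimpleGraph V} {U : Set V}

lemma binomialEdgeIdeal_le_labelIdeal_componentIn :
    binomialEdgeIdeal K G ≤ labelIdeal K (componentIn G U) := by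
  refine Ideal.span_le.2 ?_
  rintro f ⟨i, j, hij, rfl⟩
  refine edgeBinomial_mem_labelIdeal_iff.2 ?_
  by_contra! hne
  obtain ⟨hi, hj, hcomp⟩ := hne
  rw [Ne, componentIn_eq_none_iff, not_not] at hi hj
  exact hcomp ((componentIn_eq_componentIn_iff hi hj).2 (reachable_induce_of_adj hi hj hij))

lemma edgeBinomial_mem_of_reachable {Q : Ideal (MvPolynomial (V ⊕ V) K)} [Q.IsPrime]
    (hJ : binomialEdgeIdeal K G ≤ Q) (hU : ∀ i ∈ U, ∃ v, vertex v = i ∧ X v ∉ Q) {i j : U}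
    (hr : (G.induce U).Reachable i j) : edgeBinomial K (i : V) j ∈ Q := by
  rw [SimpleGraph.reachable_iff_reflTransGen] at hr
  induction hr with
  | refl => rw [edgeBinomial, sub_self]; exact Q.zero_mem
  | @tail b d _ hbd ih =>
    have hedge : edgeBinomial K (b : V) d ∈ Q := hJ (Ideal.subset_span ⟨b, d, hbd, rfl⟩)
    exact edgeBinomial_mem_trans (hU b b.2) ih hedge

end ReachableBinomials

section PTIdeal

variable {K : Type*} [Field K] {n : ℕ} {G : SimpleGraph (Fin n)} {S T : Set (Fin n)}

lemma X_mem_PTIdeal {v : Fin n ⊕ Fin n} (hv : vertex v ∈ T) : X v ∈ PTIdeal K G T := by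
  rcases v with i | i
  · exact Ideal.subset_span (Or.inl (Or.inl ⟨i, hv, rfl⟩))
  · exact Ideal.subset_span (Or.inl (Or.inr ⟨i, hv, rfl⟩))

variable (K G T) in
theorem PTIdeal_eq_labelIdeal : PTIdeal K G T = labelIdeal K (componentIn G Tᶜ) := by
  refine le_antisymm (Ideal.span_le.2 ?_) (labelIdeal_le_iff.2 ⟨fun v hv => ?_, fun i j hij => ?_⟩)
  · rintro f ((⟨i, hi, rfl⟩ | ⟨i, hi, rfl⟩) | ⟨i, j, hi, hj, -, hr, rfl⟩)
    · exact X_mem_labelIdeal (componentIn_eq_none_iff.2 (not_not.2 hi))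
    · exact X_mem_labelIdeal (componentIn_eq_none_iff.2 (not_not.2 hi))
    · exact edgeBinomial_mem_labelIdeal ((componentIn_eq_componentIn_iff hi hj).2 hr)
  · exact X_mem_PTIdeal (not_not.1 (componentIn_eq_none_iff.1 hv))
  · by_cases hi : i ∈ T
    · exact edgeBinomial_mem_of_left (fun v hv => X_mem_PTIdeal (hv ▸ hi)) j
    by_cases hj : j ∈ T
    · exact edgeBinomial_mem_of_right (fun v hv => X_mem_PTIdeal (hv ▸ hj)) i
    obtain rfl | hne := eq_or_ne i j
    · rw [edgeBinomial, sub_self]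
      exact Ideal.zero_mem _
    · exact Ideal.subset_span
        (Or.inr ⟨i, j, hi, hj, hne, (componentIn_eq_componentIn_iff hi hj).1 hij, rfl⟩)

variable (K G T) in
theorem PTIdeal_isPrime : (PTIdeal K G T).IsPrime :=
  PTIdeal_eq_labelIdeal K G T ▸ labelIdeal_isPrime K _

variable (K G T) in
lemma binomialEdgeIdeal_le_PTIdeal : binomialEdgeIdeal K G ≤ PTIdeal K G T :=
  PTIdeal_eq_labelIdeal K G T ▸ binomialEdgeIdeal_le_labelIdeal_componentIn

lemma PTIdeal_le_PTIdeal_iff : PTIdeal K G S ≤ PTIdeal K G T ↔ ∃ h : S ⊆ T,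
    ∀ j k : (Tᶜ : Set (Fin n)),
      (G.induce Sᶜ).Reachable (Set.inclusion (Set.compl_subset_compl.2 h) j)
        (Set.inclusion (Set.compl_subset_compl.2 h) k) → (G.induce Tᶜ).Reachable j k := by
  simp only [PTIdeal_eq_labelIdeal, labelIdeal_le_iff, X_mem_labelIdeal_iff,
    edgeBinomial_mem_labelIdeal_iff, componentIn_eq_none_iff, Set.mem_compl_iff, not_not]
  constructor
  · rintro ⟨hX, hf⟩
    have hST : S ⊆ T := fun i hi => hX (Sum.inl i) hi
    refine ⟨hST, fun ⟨j, hj⟩ ⟨k, hk⟩ hr => ?_⟩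
    have hcomp := hf j k ((componentIn_eq_componentIn_iff _ _).2 hr)
    exact (componentIn_eq_componentIn_iff hj hk).1 ((hcomp.resolve_left hj).resolve_left hk)
  · rintro ⟨hST, hr⟩
    refine ⟨fun v hv => hST hv, fun j k hjk => ?_⟩
    by_cases hj : j ∈ T
    · exact Or.inl hj
    by_cases hk : k ∈ T
    · exact Or.inr (Or.inl hk)
    have hrS := (componentIn_eq_componentIn_iff (U := Sᶜ) (mt (@hST j) hj) (mt (@hST k) hk)).1 hjk
    exact Or.inr (Or.inr
      ((componentIn_eq_componentIn_iff (U := Tᶜ) hj hk).2 (hr ⟨j, hj⟩ ⟨k, hk⟩ hrS)))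

theorem exists_PTIdeal_le_of_isPrime {Q : Ideal (MvPolynomial (Fin n ⊕ Fin n) K)} [Q.IsPrime]
    (hJ : binomialEdgeIdeal K G ≤ Q) : ∃ S, PTIdeal K G S ≤ Q := by
  let S : Set (Fin n) := {i | ∀ v, vertex v = i → X v ∈ Q}
  have hS : ∀ i ∈ Sᶜ, ∃ v, vertex v = i ∧ X v ∉ Q := fun i hi => by
    simpa only [S, Set.mem_compl_iff, Set.mem_ofPred_eq, not_forall, exists_prop] using hi
  refine ⟨S, Ideal.span_le.2 ?_⟩
  rintro f ((⟨i, hi, rfl⟩ | ⟨i, hi, rfl⟩) | ⟨i, j, hi, hj, -, hr, rfl⟩)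
  · exact hi (Sum.inl i) rfl
  · exact hi (Sum.inr i) rfl
  · exact edgeBinomial_mem_of_reachable (U := Sᶜ) (i := ⟨i, hi⟩) (j := ⟨j, hj⟩) hJ hS hr

theorem PTIdeal_mem_minimalPrimes_iff_forall_le :
    PTIdeal K G T ∈ (binomialEdgeIdeal K G).minimalPrimes ↔
      ∀ S, PTIdeal K G S ≤ PTIdeal K G T → S = T := by
  constructor
  · intro hmin S hST
    have hTS : PTIdeal K G T ≤ PTIdeal K G S :=
      hmin.2 ⟨PTIdeal_isPrime K G S, binomialEdgeIdeal_le_PTIdeal K G S⟩ hST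
    exact (PTIdeal_le_PTIdeal_iff.1 hST).1.antisymm (PTIdeal_le_PTIdeal_iff.1 hTS).1
  · intro hmin
    refine ⟨⟨PTIdeal_isPrime K G T, binomialEdgeIdeal_le_PTIdeal K G T⟩, ?_⟩
    rintro Q ⟨hQ, hJ⟩ hQT
    obtain ⟨S, hSQ⟩ := exists_PTIdeal_le_of_isPrime hJ
    obtain rfl := hmin S (hSQ.trans hQT)
    exact hSQ

end PTIdeal

/-- For `T ⊆ [n]`, the prime `P_T(G)` is a minimal prime of `J_G`
if and only if `T` has the cutpoint property for `G`. -/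
theorem PTIdeal_mem_minimalPrimes_iff (K : Type*) [Field K] (n : ℕ)
    (G : SimpleGraph (Fin n)) (T : Set (Fin n)) :
    PTIdeal K G T ∈ (binomialEdgeIdeal K G).minimalPrimes ↔ HasCutpointProperty G T := by
  rw [PTIdeal_mem_minimalPrimes_iff_forall_le]
  constructor
  · intro hmin i hi
    refine card_connectedComponent_induce_insert_lt_iff.2 ?_
    by_contra! hjoin
    have hcompl : (T \ {i})ᶜ ⊆ Tᶜ ∪ {i} := by rw [Set.sdiff_eq, Set.compl_inter, compl_compl]
    have hle : PTIdeal K G (T \ {i}) ≤ PTIdeal K G T := PTIdeal_le_PTIdeal_iff.2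
      ⟨Set.sdiff_subset, fun j k hr => hjoin j k (reachable_induce_mono hcompl hr)⟩
    have hmem : i ∈ T \ {i} := (hmin _ hle).symm ▸ hi
    exact hmem.2 rfl
  · intro hcut S hle
    obtain ⟨hST, hreach⟩ := PTIdeal_le_PTIdeal_iff.1 hle
    refine hST.antisymm fun i hiT => ?_
    by_contra hiS
    obtain ⟨j, k, hr, hnr⟩ := card_connectedComponent_induce_insert_lt_iff.1 (hcut i hiT)
    have hsub : Tᶜ ∪ {i} ⊆ Sᶜ :=
      Set.union_subset (Set.compl_subset_compl.2 hST) (Set.singleton_subset_iff.2 hiS)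
    exact hnr (hreach j k (reachable_induce_mono hsub hr))

end
end

section
/- Let G be a connected graph on [n]. If T ∈ 𝒞(G), then T contains no free vertex of the clique complex Δ(G), i.e., no vertex of T belongs to exactly one maximal clique of G. -/
/-!
A vertex lying in exactly one maximal clique has pairwise adjacent neighbours, so a walk through it
can be rerouted along an edge between neighbours. Removing such a vertex from an induced subgraph
therefore never separates two vertices, so the number of components cannot increase.
-/

open MvPolynomial

noncomputable section

/-- A vertex is a free vertex of the clique complex `Δ(G)` if it belongs to exactly
one maximal clique of `G`. -/
def IsFreeVertex {n : ℕ} (G : SimpleGraph (Fin n)) (v : Fin n) : Prop :=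
  ∃! s : Set (Fin n), Maximal G.IsClique s ∧ v ∈ s

section

variable {V W : Type*} {G : SimpleGraph V}

theorem exists_maximal_isClique_superset {s : Set V} (hs : G.IsClique s) :
    ∃ t, s ⊆ t ∧ Maximal G.IsClique t :=
  zorn_subset_nonempty {t | G.IsClique t}
    (fun c hc hchain _ => ⟨⋃₀ c, (SimpleGraph.isClique_sUnion hchain.directedOn).2 hc,
      fun _ => Set.subset_sUnion_of_mem⟩) s hs

theorem isClique_neighborSet_of_existsUnique_maximal_isClique {i : V}
    (hi : ∃! s, Maximal G.IsClique s ∧ i ∈ s) : G.IsClique (G.neighborSet i) := by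
  obtain ⟨s, ⟨hs, -⟩, hunique⟩ := hi
  refine hs.prop.subset fun u (hu : G.Adj i u) => ?_
  obtain ⟨t, hut, ht⟩ :=
    exists_maximal_isClique_superset (SimpleGraph.isClique_pair.2 fun _ => hu)
  obtain ⟨hit, hut⟩ := Set.pair_subset_iff.1 hut
  exact hunique t ⟨ht, hit⟩ ▸ hut

theorem reachable_map_of_forall_adj {H : SimpleGraph W} (f : V → W)
    (hf : ∀ u v, G.Adj u v → H.Reachable (f u) (f v)) {a b : V} (h : G.Reachable a b) :
    H.Reachable (f a) (f b) := by
  simp only [SimpleGraph.reachable_iff_reflTransGen] at hf h ⊢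
  exact Relation.ReflTransGen.lift' f hf _ _ h

variable {S : Set V} {i : V}

theorem reachable_induce_of_reachable_induce_union_singleton
    (hi : ∀ u v : S, G.Adj i u → G.Adj i v → (G.induce S).Reachable u v) {a b : S}
    (h : (G.induce (S ∪ {i})).Reachable ⟨a, Or.inl a.2⟩ ⟨b, Or.inl b.2⟩) :
    (G.induce S).Reachable a b := by
  classical
  -- Retract `S ∪ {i}` onto `S` by sending `i` to one of its neighbours, or anywhere if it has none.
  obtain ⟨w, hw⟩ : ∃ w : S, ∀ u : S, G.Adj i u → (G.induce S).Reachable u w := by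
    by_cases hnbr : ∃ w : S, G.Adj i w
    · obtain ⟨w, hw⟩ := hnbr
      exact ⟨w, fun u hu => hi u w hu hw⟩
    · exact ⟨a, fun u hu => (hnbr ⟨u, hu⟩).elim⟩
  let r : ↥(S ∪ {i}) → S := fun v => if hv : v.1 ∈ S then ⟨v, hv⟩ else w
  have hr (u v : ↥(S ∪ {i})) (huv : G.Adj u v) : (G.induce S).Reachable (r u) (r v) := by
    have eq_of_notMem (x : ↥(S ∪ {i})) (hx : x.1 ∉ S) : x.1 = i := x.2.resolve_left hx
    by_cases hu : u.1 ∈ S <;> by_cases hv : v.1 ∈ S <;>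
      simp only [r, hu, hv, dif_pos, dif_neg, not_false_eq_true]
    · exact SimpleGraph.Adj.reachable (G := G.induce S) huv
    · exact hw ⟨u, hu⟩ (by simpa only [eq_of_notMem v hv] using huv.symm)
    · exact (hw ⟨v, hv⟩ (by simpa only [eq_of_notMem u hu] using huv)).symm
    · exact .rfl
  simpa [r] using reachable_map_of_forall_adj r hr h

theorem injective_connectedComponent_map_induce_union_singleton
    (hi : ∀ u v : S, G.Adj i u → G.Adj i v → (G.induce S).Reachable u v) :
    Function.Injective (SimpleGraph.ConnectedComponent.map
      (G.induceHomOfLE (Set.subset_union_left : S ⊆ S ∪ {i})).toHom) := by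
  refine SimpleGraph.ConnectedComponent.ind₂ fun a b hab => ?_
  exact SimpleGraph.ConnectedComponent.sound
    (reachable_induce_of_reachable_induce_union_singleton hi
      (SimpleGraph.ConnectedComponent.exact hab))

theorem reachable_induce_of_isClique_neighborSet (hi : G.IsClique (G.neighborSet i)) (u v : S)
    (hu : G.Adj i u) (hv : G.Adj i v) : (G.induce S).Reachable u v := by
  obtain rfl | huv := eq_or_ne u v
  · rfl
  · exact SimpleGraph.Adj.reachable (G := G.induce S) (hi hu hv (Subtype.coe_ne_coe.2 huv))

end

theorem hasCutpointProperty_no_free_vertex_general {V : Type*} (G : SimpleGraph V) (T : Set V)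
    (hT : ∀ i ∈ T, Cardinal.mk (G.induce (Tᶜ ∪ {i})).ConnectedComponent <
      Cardinal.mk (G.induce Tᶜ).ConnectedComponent) :
    ∀ i ∈ T, ¬ ∃! s : Set V, Maximal G.IsClique s ∧ i ∈ s := by
  intro i hiT hfree
  have hclique : G.IsClique (G.neighborSet i) :=
    isClique_neighborSet_of_existsUnique_maximal_isClique hfree
  exact (hT i hiT).not_ge (Cardinal.mk_le_of_injective
    (injective_connectedComponent_map_induce_union_singleton
      (reachable_induce_of_isClique_neighborSet hclique)))

/-- Let `G` be a connected graph on `[n]`. If `T ∈ 𝒞(G)`, then no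
vertex of `T` is a free vertex of the clique complex `Δ(G)`. -/
theorem hasCutpointProperty_no_free_vertex (n : ℕ) (G : SimpleGraph (Fin n))
    (hConn : G.Connected) (T : Set (Fin n)) (hT : HasCutpointProperty G T) :
    ∀ i ∈ T, ¬ IsFreeVertex G i :=
  hasCutpointProperty_no_free_vertex_general G T
    (by simpa only [HasCutpointProperty, cNum, ← Nat.cast_card, Nat.cast_lt] using hT)

end
end
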